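/- Exponential suppression of short boundaries in the elongated phase: let μ₁ < log 6 and set r = 6·exp(−μ₁) − 1 > 0. Then there exist 0 < δ < ε < 1 and N₀ such that for all even N ≥ N₀ and all even m with 2 ≤ m ≤ δN, P_{N,μ₁}(m) ≤ (1 + r/2)^(−εN/2). -/

import Mathlib

open Filter Real MeasureTheory

/-- Number of rooted quasitriangulations of a sphere with a hole with `N` triangles and
`m` boundary edges (Goulden–Jackson), with `j = (N - m)/2`. -/
noncomputable def C0 (N m : ℕ) : ℝ :=
  (2 : ℝ) ^ ((N - m) / 2 + 2) * (Nat.factorial (2 * m + 3 * ((N - m) / 2) - 1) : ℝ) *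
    (Nat.factorial (2 * m - 3) : ℝ) /
    ((Nat.factorial ((N - m) / 2 + 1) : ℝ) * (Nat.factorial (2 * m + 2 * ((N - m) / 2)) : ℝ) *
      ((Nat.factorial (m - 2) : ℝ)) ^ 2)

/-- The filter "N → ∞ along even integers". -/
def evenAtTop : Filter ℕ := Filter.atTop ⊓ Filter.principal {N | Even N}
/-- Weight of boundary length m: w_{μ₁}(N,m) = exp(-μ₁ m/2) C₀(N,m). -/
noncomputable def w (μ₁ : ℝ) (N m : ℕ) : ℝ := Real.exp (-μ₁ * m / 2) * C0 N m

/-- Normalizing constant Θ_N(μ₁) = Σ_{m even, 2 ≤ m ≤ N} w_{μ₁}(N,m). -/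
noncomputable def Θ (μ₁ : ℝ) (N : ℕ) : ℝ :=
  ∑ m ∈ (Finset.range (N + 1)).filter (fun m => Even m ∧ 2 ≤ m), w μ₁ N m

/-- Boundary-length distribution P_{N,μ₁}(m) = w_{μ₁}(N,m)/Θ_N(μ₁). -/
noncomputable def P (μ₁ : ℝ) (N m : ℕ) : ℝ := w μ₁ N m / Θ μ₁ N

theorem C0_pos (N m : ℕ) : 0 < C0 N m := by
  unfold C0
  positivity

theorem C0_step (a j : ℕ) :
    C0 (a + 2 + 2 * (j + 1)) (a + 4) * ((2 * a + 2 * j + 7) * (2 * a + 2 * j + 8) * ((a + 1) * (a + 2)))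
      = C0 (a + 2 + 2 * (j + 1)) (a + 2) *
        (2 * (2 * a + 3 * j + 7) * (j + 2) * ((2 * a + 3) * (2 * a + 5))) := by
  unfold C0
  have e1 : (a + 2 + 2 * (j + 1) - (a + 4)) / 2 = j := by omega
  have e2 : (a + 2 + 2 * (j + 1) - (a + 2)) / 2 = j + 1 := by omega
  rw [e1, e2]
  have e3 : 2 * (a + 4) + 3 * j - 1 = (2 * a + 3 * j + 6) + 1 := by omega
  have e4 : 2 * (a + 2) + 3 * (j + 1) - 1 = 2 * a + 3 * j + 6 := by omega
  have e5 : 2 * (a + 4) - 3 = (2 * a + 1) + 1 + 1 + 1 + 1 := by omega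
  have e6 : 2 * (a + 2) - 3 = 2 * a + 1 := by omega
  have e7 : 2 * (a + 4) + 2 * j = (2 * a + 2 * j + 6) + 1 + 1 := by omega
  have e8 : 2 * (a + 2) + 2 * (j + 1) = (2 * a + 2 * j + 6) := by omega
  have e9 : a + 4 - 2 = a + 1 + 1 := by omega
  have e10 : a + 2 - 2 = a := by omega
  rw [e3, e4, e5, e6, e7, e8, e9, e10]
  rw [show j + 1 + 2 = (j + 2) + 1 by ring, pow_succ]
  rw [Nat.factorial_succ (2 * a + 3 * j + 6), Nat.factorial_succ (2 * a + 1 + 1 + 1 + 1),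
    Nat.factorial_succ (2 * a + 1 + 1 + 1), Nat.factorial_succ (2 * a + 1 + 1),
    Nat.factorial_succ (2 * a + 1), Nat.factorial_succ (2 * a + 2 * j + 6 + 1),
    Nat.factorial_succ (2 * a + 2 * j + 6), Nat.factorial_succ (a + 1), Nat.factorial_succ a,
    Nat.factorial_succ (j + 1)]
  have f1 : ((2 * a + 2 * j + 6).factorial : ℝ) ≠ 0 := by positivity
  have f2 : (a.factorial : ℝ) ≠ 0 := by positivity
  have f3 : ((j + 1).factorial : ℝ) ≠ 0 := by positivity
  generalize ((2 * a + 2 * j + 6).factorial) = F1 at *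
  generalize (a.factorial) = F2 at *
  generalize ((j + 1).factorial) = F3 at *
  generalize ((2 * a + 3 * j + 6).factorial) = F4 at *
  generalize ((2 * a + 1).factorial) = F5 at *
  push_cast
  have g1 : (a : ℝ) + 1 ≠ 0 := by positivity
  have g2 : (a : ℝ) + 1 + 1 ≠ 0 := by positivity
  have g3 : (j : ℝ) + 1 + 1 ≠ 0 := by positivity
  have g4 : 2 * (a : ℝ) + 2 * j + 6 + 1 ≠ 0 := by positivity
  have g5 : 2 * (a : ℝ) + 2 * j + 6 + 1 + 1 ≠ 0 := by positivity
  rw [div_mul_eq_mul_div, div_mul_eq_mul_div, div_eq_div_iff (by positivity) (by positivity)]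
  ring

theorem w_step (μ₁ r η : ℝ) (hr : r = 6 * Real.exp (-μ₁) - 1) (hr0 : 0 < r)
    (hη : η = r / (8 * (1 + r))) (a j : ℕ)
    (h : (a : ℝ) + 4 ≤ η * ((a + 2 + 2 * (j + 1) : ℕ) : ℝ)) :
    (1 + r / 2) * w μ₁ (a + 2 + 2 * (j + 1)) (a + 2) ≤ w μ₁ (a + 2 + 2 * (j + 1)) (a + 4) := by
  have hs := C0_step a j
  have hp := C0_pos (a + 2 + 2 * (j + 1)) (a + 2)
  unfold w
  set A := C0 (a + 2 + 2 * (j + 1)) (a + 4)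
  set B := C0 (a + 2 + 2 * (j + 1)) (a + 2)
  have hE : Real.exp (-μ₁ * ((a + 4 : ℕ) : ℝ) / 2)
      = Real.exp (-μ₁ * ((a + 2 : ℕ) : ℝ) / 2) * Real.exp (-μ₁) := by
    rw [← Real.exp_add]; congr 1; push_cast; ring
  have he : Real.exp (-μ₁) = (1 + r) / 6 := by rw [hr]; ring
  rw [hE, he]
  have hX := Real.exp_pos (-μ₁ * ((a + 2 : ℕ) : ℝ) / 2)
  set X := Real.exp (-μ₁ * ((a + 2 : ℕ) : ℝ) / 2)
  suffices hh : (1 + r / 2) * B ≤ (1 + r) / 6 * A by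
    calc (1 + r / 2) * (X * B) = X * ((1 + r / 2) * B) := by ring
      _ ≤ X * ((1 + r) / 6 * A) := by gcongr
      _ = _ := by ring
  have ha : (0 : ℝ) ≤ a := by positivity
  have hj : (0 : ℝ) ≤ j := by positivity
  set D : ℝ := (2 * a + 2 * j + 7) * (2 * a + 2 * j + 8) with hD
  have hDp : 0 < D := by positivity
  have hQ : (0 : ℝ) < (a + 1) * (a + 2) := by positivity
  have hA : 8 * ((2 * a + 3 * j + 7) * (j + 2)) * B ≤ A * D := by
    have h1 : (4 : ℝ) * ((a + 1) * (a + 2)) ≤ (2 * a + 3) * (2 * a + 5) := by nlinarith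
    refine le_of_mul_le_mul_right ?_ hQ
    calc 8 * ((2 * a + 3 * j + 7) * (j + 2)) * B * ((a + 1) * (a + 2))
        = B * (2 * (2 * a + 3 * j + 7) * (j + 2) * (4 * ((a + 1) * (a + 2)))) := by ring
      _ ≤ B * (2 * (2 * a + 3 * j + 7) * (j + 2) * ((2 * a + 3) * (2 * a + 5))) := by gcongr
      _ = _ := by rw [← hs]; ring
  have key : (1 + r / 2) * D ≤ (1 + r) / 6 * (8 * ((2 * a + 3 * j + 7) * (j + 2))) := by
    push_cast at h
    set n : ℝ := a + 2 + 2 * (j + 1) with hn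
    have hnp : 0 < n := by positivity
    have hη0 : 0 < η := by rw [hη]; positivity
    have hη1 : η * (8 * (1 + r)) = r := by rw [hη]; field_simp
    have hη2 : η < 1 / 8 := by nlinarith
    have u1 : D ≤ (n * (1 + η)) ^ 2 := by
      rw [hD, sq]
      gcongr <;> linarith
    have u2 : 6 * (n * (1 - η)) ^ 2 ≤ 8 * ((2 * a + 3 * j + 7) * (j + 2)) := by
      have v1 : n * (1 - η) ≤ 2 * (j + 2) := by linarith
      have v2 : 3 * (n * (1 - η)) ≤ 2 * (2 * a + 3 * j + 7) := by linarith
      have v0 : 0 ≤ n * (1 - η) := by apply mul_nonneg <;> linarith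
      have := mul_le_mul v1 v2 (by linarith) (by linarith)
      nlinarith
    have u3 : (1 + r / 2) * (1 + η) ^ 2 ≤ (1 + r) * (1 - η) ^ 2 := by
      have : (1 + r) * (1 - η) ^ 2 - (1 + r / 2) * (1 + η) ^ 2
        = r / 2 * (1 + η) ^ 2 - 4 * η * (1 + r) := by ring
      have t : 0 ≤ r * (2 * η + η ^ 2) := by positivity
      linarith
    calc (1 + r / 2) * D ≤ (1 + r / 2) * (n * (1 + η)) ^ 2 := by gcongr
      _ = n ^ 2 * ((1 + r / 2) * (1 + η) ^ 2) := by ring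
      _ ≤ n ^ 2 * ((1 + r) * (1 - η) ^ 2) := by gcongr
      _ = (1 + r) / 6 * (6 * (n * (1 - η)) ^ 2) := by ring
      _ ≤ _ := by gcongr
  refine le_of_mul_le_mul_right ?_ hDp
  calc (1 + r / 2) * B * D = B * ((1 + r / 2) * D) := by ring
    _ ≤ B * ((1 + r) / 6 * (8 * ((2 * a + 3 * j + 7) * (j + 2)))) := by gcongr
    _ = (1 + r) / 6 * (8 * ((2 * a + 3 * j + 7) * (j + 2)) * B) := by ring
    _ ≤ (1 + r) / 6 * (A * D) := by gcongr
    _ = _ := by ring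

theorem w_iter (μ₁ r η : ℝ) (hr : r = 6 * Real.exp (-μ₁) - 1) (hr0 : 0 < r)
    (hη : η = r / (8 * (1 + r))) (N m : ℕ) (hN : Even N) (hm : Even m) (hm2 : 2 ≤ m) (k : ℕ)
    (h : ((m + 2 * k : ℕ) : ℝ) ≤ η * N) (hle : m + 2 * k ≤ N) :
    (1 + r / 2) ^ k * w μ₁ N m ≤ w μ₁ N (m + 2 * k) := by
  induction k with
  | zero => simp
  | succ k ih =>
    have h1 := ih (le_trans (by push_cast; linarith) h) (by omega)
    obtain ⟨a, ha⟩ : ∃ a, m + 2 * k = a + 2 := ⟨m + 2 * k - 2, by omega⟩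
    obtain ⟨j, hj⟩ : ∃ j, N = a + 2 + 2 * (j + 1) := by
      obtain ⟨x, hx⟩ := hN
      obtain ⟨y, hy⟩ := hm
      exact ⟨(N - (a + 2)) / 2 - 1, by omega⟩
    have e : m + 2 * (k + 1) = a + 4 := by omega
    rw [e] at h ⊢
    rw [ha] at h1
    subst hj
    have h2 := w_step μ₁ r η hr hr0 hη a j (by push_cast at h ⊢; exact h)
    calc (1 + r / 2) ^ (k + 1) * w μ₁ (a + 2 + 2 * (j + 1)) m
        = (1 + r / 2) * ((1 + r / 2) ^ k * w μ₁ (a + 2 + 2 * (j + 1)) m) := by ring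
      _ ≤ (1 + r / 2) * w μ₁ (a + 2 + 2 * (j + 1)) (a + 2) := by gcongr
      _ ≤ _ := h2

/-- Exponential suppression of short boundaries in the elongated phase: with
r = 6 exp(-μ₁) - 1 > 0, there are 0 < δ < ε < 1 such that for all large even N and all
even m with 2 ≤ m ≤ δN, P_{N,μ₁}(m) ≤ (1 + r/2)^(-εN/2). -/
theorem short_boundary_suppression (μ₁ : ℝ) (hμ : μ₁ < Real.log 6)
    (r : ℝ) (hr : r = 6 * Real.exp (-μ₁) - 1) :
    0 < r ∧
    ∃ δ ε : ℝ, 0 < δ ∧ δ < ε ∧ ε < 1 ∧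
      ∃ N₀ : ℕ, ∀ N : ℕ, N₀ ≤ N → Even N →
        ∀ m : ℕ, Even m → 2 ≤ m → (m : ℝ) ≤ δ * N →
          P μ₁ N m ≤ (1 + r / 2) ^ (-(ε * N / 2)) := by
  have hr0 : 0 < r := by
    have h1 : Real.exp μ₁ < 6 := by
      rw [← Real.lt_log_iff_exp_lt (by norm_num)]; exact hμ
    have h2 : Real.exp (-μ₁) * Real.exp μ₁ = 1 := by rw [← Real.exp_add]; simp
    have h3 := Real.exp_pos (-μ₁)
    nlinarith
  refine ⟨hr0, ?_⟩
  obtain ⟨η, hη⟩ : ∃ η, η = r / (8 * (1 + r)) := ⟨_, rfl⟩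
  have hη0 : 0 < η := by rw [hη]; positivity
  have hη1 : η * (8 * (1 + r)) = r := by rw [hη]; field_simp
  have hη2 : η < 1 / 8 := by nlinarith
  refine ⟨η / 4, η / 2, by linarith, by linarith, by linarith, ⌈8 / η⌉₊, ?_⟩
  intro N hN0 hN m hm hm2 hmδ
  have hN1 : 8 ≤ η * N := by
    have := (Nat.le_ceil (8 / η)).trans (Nat.cast_le.mpr hN0)
    rw [div_le_iff₀ hη0] at this
    linarith
  obtain ⟨k, hk⟩ : ∃ k, k = ⌈η / 2 * N / 2⌉₊ := ⟨_, rfl⟩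
  have hk1 : η / 2 * N / 2 ≤ k := by rw [hk]; exact Nat.le_ceil _
  have hk2 : (k : ℝ) < η / 2 * N / 2 + 1 := by rw [hk]; exact Nat.ceil_lt_add_one (by positivity)
  have hb : ((m + 2 * k : ℕ) : ℝ) ≤ η * N := by push_cast; linarith
  have hle : m + 2 * k ≤ N := by
    have : ((m + 2 * k : ℕ) : ℝ) ≤ N := hb.trans (by
      have : (0 : ℝ) ≤ N := by positivity
      nlinarith)
    exact_mod_cast this
  have hit := w_iter μ₁ r η hr hr0 hη N m hN hm hm2 k hb hle
  have wpos : ∀ i, 0 < w μ₁ N i := fun i => mul_pos (Real.exp_pos _) (C0_pos N i)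
  have hΘ : w μ₁ N (m + 2 * k) ≤ Θ μ₁ N := by
    unfold Θ
    refine Finset.single_le_sum (f := fun i => w μ₁ N i) (fun i _ => (wpos i).le) ?_
    simp only [Finset.mem_filter, Finset.mem_range]
    exact ⟨by omega, hm.add (even_two_mul k), by omega⟩
  have hΘp : 0 < Θ μ₁ N := (wpos _).trans_le hΘ
  have hq : (0 : ℝ) < 1 + r / 2 := by linarith
  unfold P
  rw [Real.rpow_neg hq.le, div_le_iff₀ hΘp, inv_mul_eq_div, le_div_iff₀ (by positivity)]
  have hpw : (1 + r / 2) ^ (η / 2 * N / 2) ≤ (1 + r / 2) ^ k := by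
    rw [← Real.rpow_natCast]
    exact Real.rpow_le_rpow_of_exponent_le (by linarith) hk1
  calc w μ₁ N m * (1 + r / 2) ^ (η / 2 * N / 2) ≤ w μ₁ N m * (1 + r / 2) ^ k :=
        mul_le_mul_of_nonneg_left hpw (wpos m).le
    _ ≤ _ := by linarith
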